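/- arXiv:1409.5327 — 2 statements merged into one kernel-verified Lean document; each statement's English description precedes it below -/
import Mathlib

section
/- Proposition (Store-Forward converges to proportional fairness): let Q ∈ ℕ^J with Q_j ≥ 1 for every j. The function s ↦ ∑_{j ∈ J} Q_j log s_j attains its maximum over P ∩ (0, ∞)^J at a unique point σ^PF(Q), and for every j ∈ J, the Store-Forward allocation converges to it: lim_{c → ∞, c ∈ ℕ} Φ(cQ − e_j) / Φ(cQ) = σ^PF_j(Q), where e_j is the j-th unit vector of ℕ^J. -/
open scoped BigOperators Classical

/-- The Store-Forward normalizing constant `Φ(Q)`. -/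
noncomputable def Phi {J L : Type*} [Fintype J] [Fintype L]
    (A : L → J → ℝ) (Q : J → ℕ) : ℝ :=
  ∑' m : L → J → ℕ,
    if (∀ l j, A l j = 0 → m l j = 0) ∧ (∀ j, ∑ l, m l j = Q j) then
      ∏ l, (((∑ j, m l j).factorial : ℝ) / ∏ j, ((m l j).factorial : ℝ)) *
        ∏ j, A l j ^ m l j
    else 0

/-- weight of one row -/
noncomputable def rowW {J : Type*} [Fintype J] (a : J → ℝ) (k : J → ℕ) : ℝ :=
  (((∑ j, k j).factorial : ℝ) / ∏ j, ((k j).factorial : ℝ)) * ∏ j, a j ^ k j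

noncomputable def arrW {J L : Type*} [Fintype J] [Fintype L]
    (A : L → J → ℝ) (m : L → J → ℕ) : ℝ := ∏ l, rowW (A l) (m l)

/-- arrays with given column sums -/
noncomputable def arrS {J L : Type*} [Fintype J] [Fintype L] (N : J → ℕ) :
    Finset (L → J → ℕ) :=
  (Fintype.piFinset (fun _ : L => Fintype.piFinset (fun j : J => Finset.range (N j + 1)))).filter
    (fun m => ∀ j, ∑ l, m l j = N j)

theorem mem_arrS {J L : Type*} [Fintype J] [Fintype L] (N : J → ℕ) (m : L → J → ℕ) :
    m ∈ arrS N ↔ ∀ j, ∑ l, m l j = N j := by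
  unfold arrS
  simp only [Finset.mem_filter, Fintype.mem_piFinset, Finset.mem_range, and_iff_right_iff_imp]
  intro h l j
  rw [← h j]
  exact Nat.lt_succ_of_le
    (Finset.single_le_sum (f := fun l => m l j) (fun _ _ => Nat.zero_le _) (Finset.mem_univ l))

theorem rowW_nonneg {J : Type*} [Fintype J] (a : J → ℝ) (ha : ∀ j, 0 ≤ a j) (k : J → ℕ) :
    0 ≤ rowW a k := by
  unfold rowW
  have : 0 ≤ ∏ j, a j ^ k j := Finset.prod_nonneg fun j _ => pow_nonneg (ha j) _
  positivity

theorem arrW_nonneg {J L : Type*} [Fintype J] [Fintype L]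
    (A : L → J → ℝ) (hA : ∀ l j, 0 ≤ A l j) (m : L → J → ℕ) : 0 ≤ arrW A m :=
  Finset.prod_nonneg fun l _ => rowW_nonneg _ (hA l) _

theorem Phi_eq {J L : Type*} [Fintype J] [Fintype L] (A : L → J → ℝ) (N : J → ℕ) :
    Phi A N = ∑ m ∈ arrS N, arrW A m := by
  unfold Phi
  rw [tsum_eq_sum (s := arrS N)]
  · refine Finset.sum_congr rfl fun m hm => ?_
    rw [mem_arrS] at hm
    by_cases h : ∀ l j, A l j = 0 → m l j = 0
    · rw [if_pos ⟨h, hm⟩]; rfl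
    · rw [if_neg (fun h' => h h'.1)]
      push Not at h
      obtain ⟨l, j, h0, h1⟩ := h
      symm
      refine Finset.prod_eq_zero (Finset.mem_univ l) ?_
      unfold rowW
      rw [Finset.prod_eq_zero (f := fun j => A l j ^ m l j) (Finset.mem_univ j), mul_zero]
      rw [h0, zero_pow h1]
  · intro m hm
    rw [mem_arrS] at hm
    rw [if_neg (fun h' => hm h'.2)]

theorem Phi_pos {J L : Type*} [Fintype J] [Fintype L] (A : L → J → ℝ)
    (hA : ∀ l j, 0 ≤ A l j) (hcol : ∀ j, ∃ l, 0 < A l j) (N : J → ℕ) : 0 < Phi A N := by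
  rw [Phi_eq]
  choose f hf using hcol
  have hm : (fun l j => if l = f j then N j else 0) ∈ arrS (L := L) N := by
    rw [mem_arrS]; intro j; simp
  refine lt_of_lt_of_le ?_ (Finset.single_le_sum (fun m _ => arrW_nonneg A hA m) hm)
  refine Finset.prod_pos fun l _ => ?_
  unfold rowW
  have : 0 < ∏ j, A l j ^ (if l = f j then N j else 0) := by
    refine Finset.prod_pos fun j _ => ?_
    split_ifs with h
    · rw [h]; exact pow_pos (hf j) _
    · simp
  positivity

theorem rowW_shift {J : Type*} [Fintype J] [DecidableEq J] (a : J → ℝ) (k : J → ℕ) (j : J) :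
    rowW a (k + Pi.single j 1) * (k j + 1) = rowW a k * ((∑ i, k i : ℕ) + 1) * a j := by
  unfold rowW
  have h1 : ∑ i, (k + Pi.single j 1 : J → ℕ) i = (∑ i, k i) + 1 := by
    simp [Finset.sum_add_distrib]
  have h2 : ∏ i, (((k + Pi.single j 1 : J → ℕ) i).factorial : ℝ)
      = (k j + 1) * ∏ i, ((k i).factorial : ℝ) := by
    rw [← Finset.mul_prod_erase _ _ (Finset.mem_univ j),
      ← Finset.mul_prod_erase _ (fun i => ((k i).factorial : ℝ)) (Finset.mem_univ j),
      ← mul_assoc]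
    congr 1
    · simp [Nat.factorial_succ]
    · refine Finset.prod_congr rfl fun i hi => ?_
      simp [Finset.ne_of_mem_erase hi]
  have h3 : ∏ i, a i ^ ((k + Pi.single j 1 : J → ℕ) i) = a j * ∏ i, a i ^ k i := by
    rw [← Finset.mul_prod_erase _ _ (Finset.mem_univ j),
      ← Finset.mul_prod_erase _ (fun i => a i ^ k i) (Finset.mem_univ j),
      ← mul_assoc]
    congr 1
    · simp [pow_succ, mul_comm]
    · refine Finset.prod_congr rfl fun i hi => ?_
      simp [Finset.ne_of_mem_erase hi]
  rw [h1, h2, h3, Nat.factorial_succ]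
  have : ∏ i, ((k i).factorial : ℝ) ≠ 0 :=
    Finset.prod_ne_zero_iff.2 fun i _ => by positivity
  push_cast
  field_simp

/-- unit array -/
def unitA {J L : Type*} [DecidableEq J] [DecidableEq L] (l : L) (j : J) : L → J → ℕ :=
  Pi.single l (Pi.single j 1)

theorem arrW_shift {J L : Type*} [Fintype J] [Fintype L] [DecidableEq J] [DecidableEq L]
    (A : L → J → ℝ) (m : L → J → ℕ) (l : L) (j : J) :
    arrW A (m + unitA l j) * (m l j + 1) = arrW A m * ((∑ i, m l i : ℕ) + 1) * A l j := by
  unfold arrW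
  rw [← Finset.mul_prod_erase _ _ (Finset.mem_univ l),
      ← Finset.mul_prod_erase _ (fun i => rowW (A i) (m i)) (Finset.mem_univ l)]
  have h1 : ∏ i ∈ Finset.univ.erase l, rowW (A i) ((m + unitA l j) i)
      = ∏ i ∈ Finset.univ.erase l, rowW (A i) (m i) := by
    refine Finset.prod_congr rfl fun i hi => ?_
    simp [unitA, Finset.ne_of_mem_erase hi]
  have h2 : (m + unitA l j) l = m l + Pi.single j 1 := by simp [unitA]
  rw [h1, h2]
  have := rowW_shift (A l) (m l) j
  linear_combination (∏ i ∈ Finset.univ.erase l, rowW (A i) (m i)) * this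

theorem unitA_sum {J L : Type*} [Fintype L] [DecidableEq J] [DecidableEq L]
    (m : L → J → ℕ) (l : L) (j j' : J) :
    ∑ i, (m + unitA l j) i j' = (∑ i, m i j') + (Pi.single j 1 : J → ℕ) j' := by
  simp only [Pi.add_apply, Finset.sum_add_distrib, unitA]
  congr 1
  rw [Finset.sum_eq_single l]
  · simp
  · intro b _ hb; simp [hb]
  · simp

/-- main shift identity -/
theorem shiftT {J L : Type*} [Fintype J] [Fintype L] [DecidableEq J] [DecidableEq L]
    (A : L → J → ℝ) (N : J → ℕ) (l : L) (j : J) (f : (L → J → ℕ) → ℝ) :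
    ∑ m ∈ arrS (N + Pi.single j 1), arrW A m * m l j * f m
      = ∑ m ∈ arrS N, arrW A m * ((∑ i, m l i : ℕ) + 1) * A l j * f (m + unitA l j) := by
  symm
  have h0 : ∑ m ∈ (arrS (L := L) (N + Pi.single j 1)).filter (fun m => m l j ≠ 0),
      arrW A m * m l j * f m
      = ∑ m ∈ arrS (N + Pi.single j 1), arrW A m * m l j * f m := by
    refine Finset.sum_filter_of_ne fun m _ h h' => h ?_
    simp [h']
  rw [← h0]
  refine Finset.sum_bij' (fun m _ => m + unitA l j) (fun m _ => m - unitA l j) ?_ ?_ ?_ ?_ ?_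
  · intro m hm
    rw [mem_arrS] at hm
    rw [Finset.mem_filter, mem_arrS]
    refine ⟨fun j' => ?_, ?_⟩
    · rw [unitA_sum, hm]; rfl
    · simp [unitA]
  · intro m hm
    rw [Finset.mem_filter, mem_arrS] at hm
    rw [mem_arrS]
    intro j'
    have hle : m - unitA l j + unitA l j = m := by
      funext a b
      by_cases ha : a = l
      · subst ha
        by_cases hb : b = j
        · subst hb; simp [unitA]; have := hm.2; omega
        · simp [unitA, hb]
      · simp [unitA, ha]
    have h1 := hm.1 j'
    rw [← hle, unitA_sum] at h1
    exact Nat.add_right_cancel h1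
  · intro m hm
    simp
  · intro m hm
    rw [Finset.mem_filter, mem_arrS] at hm
    funext a b
    by_cases ha : a = l
    · subst ha
      by_cases hb : b = j
      · subst hb; simp [unitA]; have := hm.2; omega
      · simp [unitA, hb]
    · simp [unitA, ha]
  · intro m hm
    rw [← arrW_shift]
    simp [unitA]

/-- X functional -/
noncomputable def XX {J L : Type*} [Fintype J] [Fintype L] (A : L → J → ℝ) (j : J)
    (m : L → J → ℕ) : ℝ := ∑ l, A l j * ((∑ i, m l i : ℕ) + 1)

theorem shiftSum {J L : Type*} [Fintype J] [Fintype L] [DecidableEq J] [DecidableEq L]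
    (A : L → J → ℝ) (N : J → ℕ) (j : J) (f : (L → J → ℕ) → ℝ) :
    (N j + 1) * ∑ m ∈ arrS (L := L) (N + Pi.single j 1), arrW A m * f m
      = ∑ m ∈ arrS N, arrW A m * ∑ l, A l j * ((∑ i, m l i : ℕ) + 1) * f (m + unitA l j) := by
  have h : (N j + 1) * ∑ m ∈ arrS (L := L) (N + Pi.single j 1), arrW A m * f m
      = ∑ l, ∑ m ∈ arrS (L := L) (N + Pi.single j 1), arrW A m * m l j * f m := by
    rw [Finset.sum_comm, Finset.mul_sum]
    refine Finset.sum_congr rfl fun m hm => ?_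
    rw [mem_arrS] at hm
    have := hm j
    have h2 : (∑ l, (m l j : ℝ)) = N j + 1 := by
      rw [← Nat.cast_sum, this]; simp
    rw [← h2, ← Finset.sum_mul, ← Finset.mul_sum]
    ring
  rw [h]
  simp_rw [shiftT]
  rw [Finset.sum_comm]
  refine Finset.sum_congr rfl fun m hm => ?_
  rw [Finset.mul_sum]
  refine Finset.sum_congr rfl fun l hl => ?_
  ring

theorem Phi_up {J L : Type*} [Fintype J] [Fintype L] [DecidableEq J]
    (A : L → J → ℝ) (N : J → ℕ) (j : J) :
    (N j + 1) * Phi A (N + Pi.single j 1) = ∑ m ∈ arrS N, arrW A m * XX A j m := by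
  have := shiftSum A N j (fun _ => 1)
  simp only [mul_one] at this
  rw [Phi_eq, this]; rfl

/-- (i) -/
theorem Phi_feas {J L : Type*} [Fintype J] [Fintype L] [DecidableEq J]
    (A : L → J → ℝ) (hA : ∀ l j, 0 ≤ A l j) (N : J → ℕ) (hN : ∀ j, 1 ≤ N j) (l : L) :
    ∑ j, A l j * Phi A (N - Pi.single j 1) ≤ Phi A N := by
  have key : ∀ j, A l j * Phi A (N - Pi.single j 1)
      = ∑ m ∈ arrS N, arrW A m * m l j * ((∑ i, m l i : ℕ) : ℝ)⁻¹ := by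
    intro j
    have hj : N - Pi.single j 1 + Pi.single j 1 = N := by
      funext i
      by_cases hi : i = j
      · subst hi; simp; have := hN i; omega
      · simp [hi]
    have := shiftT A (N - Pi.single j 1) l j (fun m => ((∑ i, m l i : ℕ) : ℝ)⁻¹)
    rw [hj] at this
    rw [this, Phi_eq, Finset.mul_sum]
    refine Finset.sum_congr rfl fun m _ => ?_
    have h1 : ∑ i, (m + unitA l j) l i = (∑ i, m l i) + 1 := by
      simp [unitA, Finset.sum_add_distrib]
    rw [h1]
    push_cast
    have : (∑ i, (m l i : ℝ)) + 1 ≠ 0 := by positivity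
    field_simp
  simp_rw [key]
  rw [Finset.sum_comm, Phi_eq]
  refine Finset.sum_le_sum fun m _ => ?_
  rw [← Finset.sum_mul, ← Finset.mul_sum, ← Nat.cast_sum, mul_assoc]
  exact mul_le_of_le_one_right (arrW_nonneg A hA m) mul_inv_le_one

/-- (ii) -/
theorem Phi_total {J L : Type*} [Fintype J] [Fintype L] [DecidableEq J]
    (A : L → J → ℝ) (hA : ∀ l j, 0 ≤ A l j) (N : J → ℕ) (s : J → ℝ)
    (hs : ∀ l, ∑ j, A l j * s j ≤ 1) :
    ∑ j, (N j + 1) * Phi A (N + Pi.single j 1) * s j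
      ≤ ((∑ j, (N j : ℝ)) + Fintype.card L) * Phi A N := by
  simp_rw [Phi_up, Finset.sum_mul]
  rw [Finset.sum_comm, Phi_eq, Finset.mul_sum]
  refine Finset.sum_le_sum fun m hm => ?_
  rw [mem_arrS] at hm
  simp_rw [mul_assoc]
  rw [← Finset.mul_sum, mul_comm (_ + _)]
  refine mul_le_mul_of_nonneg_left ?_ (arrW_nonneg A hA m)
  unfold XX
  simp_rw [Finset.sum_mul]
  rw [Finset.sum_comm]
  have e : (∑ j, (N j : ℝ)) + Fintype.card L = ∑ l : L, (((∑ i, m l i : ℕ) : ℝ) + 1) := by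
    rw [Finset.sum_add_distrib]
    simp only [Finset.sum_const, Finset.card_univ, nsmul_eq_mul, mul_one]
    congr 1
    simp_rw [← hm]
    push_cast
    exact Finset.sum_comm
  rw [e]
  refine Finset.sum_le_sum fun l _ => ?_
  have : ∑ j, A l j * (((∑ i, m l i : ℕ) : ℝ) + 1) * s j
      = (((∑ i, m l i : ℕ) : ℝ) + 1) * ∑ j, A l j * s j := by
    rw [Finset.mul_sum]; exact Finset.sum_congr rfl fun j _ => by ring
  rw [this]
  exact mul_le_of_le_one_right (by positivity) (hs l)

/-- (iii) -/
theorem Phi_logconvex {J L : Type*} [Fintype J] [Fintype L] [DecidableEq J]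
    (A : L → J → ℝ) (hA : ∀ l j, 0 ≤ A l j) (N : J → ℕ) (j : J) :
    (N j + 1) * Phi A (N + Pi.single j 1) ^ 2
      ≤ (N j + 2) * Phi A (N + Pi.single j 1 + Pi.single j 1) * Phi A N := by
  have h1 := Phi_up A N j
  have h2 := Phi_up A (N + Pi.single j 1) j
  have h3 := shiftSum A N j (XX A j)
  rw [← h2] at h3
  have h4 : ∑ m ∈ arrS N, arrW A m * XX A j m ^ 2 ≤ ∑ m ∈ arrS N, arrW A m *
      ∑ l, A l j * ((∑ i, m l i : ℕ) + 1) * XX A j (m + unitA l j) := by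
    refine Finset.sum_le_sum fun m _ => mul_le_mul_of_nonneg_left ?_ (arrW_nonneg A hA m)
    rw [sq]
    conv_lhs => enter [1]; unfold XX
    rw [Finset.sum_mul]
    refine Finset.sum_le_sum fun l _ => mul_le_mul_of_nonneg_left ?_
      (mul_nonneg (hA l j) (by positivity))
    unfold XX
    refine Finset.sum_le_sum fun l' _ => mul_le_mul_of_nonneg_left ?_ (hA l' j)
    gcongr
    simp
  have h5 : (∑ m ∈ arrS N, arrW A m * XX A j m) ^ 2 ≤
      (∑ m ∈ arrS N, arrW A m) * ∑ m ∈ arrS N, arrW A m * XX A j m ^ 2 := by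
    refine Finset.sum_sq_le_sum_mul_sum_of_sq_eq_mul _ (fun m _ => arrW_nonneg A hA m)
      (fun m _ => mul_nonneg (arrW_nonneg A hA m) (sq_nonneg _)) (fun m _ => by ring)
  rw [← Phi_eq, ← h1] at h5
  rw [← h3] at h4
  have hP : 0 ≤ Phi A N := by
    rw [Phi_eq]; exact Finset.sum_nonneg fun m _ => arrW_nonneg A hA m
  have h6 := h5.trans (mul_le_mul_of_nonneg_left h4 hP)
  simp only [Pi.add_apply, Pi.single_eq_same] at h6
  push_cast at h6
  have hpos : (0:ℝ) < N j + 1 := by positivity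
  refine le_of_mul_le_mul_left ?_ hpos
  nlinarith [h6]

/-- KKT point -/
theorem exists_kkt {J L : Type*} [Fintype J] [Nonempty J] [Fintype L] [Nonempty L]
    (A : L → J → ℝ) (hA : ∀ l j, 0 ≤ A l j) (hcol : ∀ j, ∃ l, 0 < A l j)
    (q : J → ℕ) (hq : ∀ j, 1 ≤ q j) :
    ∃ u : L → ℝ, (∀ l, 0 ≤ u l) ∧ ∑ l, u l = ∑ j, (q j : ℝ) ∧
      (∀ j, 0 < ∑ l, u l * A l j) ∧ ∀ l, ∑ j, A l j * (q j / ∑ l, u l * A l j) ≤ 1 := by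
  set T : ℝ := ∑ j, (q j : ℝ) with hT
  have hTpos : 0 < T := Finset.sum_pos (fun j _ => by exact_mod_cast hq j) Finset.univ_nonempty
  have hcont : Continuous (fun u : L → ℝ => ∏ j, (∑ l, (T * u l) * A l j) ^ q j) := by fun_prop
  have hne : (stdSimplex ℝ L).Nonempty := ⟨_, single_mem_stdSimplex ℝ (Classical.arbitrary L)⟩
  obtain ⟨v, hv, hmax⟩ := (isCompact_stdSimplex ℝ L).exists_isMaxOn hne hcont.continuousOn
  have hcard : (0:ℝ) < Fintype.card L := by exact_mod_cast Fintype.card_pos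
  have hval : 0 < ∏ j, (∑ l, (T * v l) * A l j) ^ q j := by
    have hmem : (fun _ : L => (Fintype.card L : ℝ)⁻¹) ∈ stdSimplex ℝ L := by
      refine ⟨fun _ => by positivity, ?_⟩
      simp [hcard.ne']
    refine lt_of_lt_of_le ?_ (hmax hmem)
    refine Finset.prod_pos fun j _ => pow_pos ?_ _
    obtain ⟨l, hl⟩ := hcol j
    refine Finset.sum_pos' (fun l _ => mul_nonneg (by positivity) (hA l j)) ⟨l, Finset.mem_univ l, ?_⟩
    positivity
  have hy0 : ∀ j, 0 ≤ ∑ l, (T * v l) * A l j := fun j =>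
    Finset.sum_nonneg fun l _ => mul_nonneg (mul_nonneg hTpos.le (hv.1 l)) (hA l j)
  have hy : ∀ j, 0 < ∑ l, (T * v l) * A l j := by
    intro j
    refine lt_of_le_of_ne (hy0 j) fun h => ?_
    refine hval.ne' (Finset.prod_eq_zero (Finset.mem_univ j) ?_)
    rw [← h, zero_pow]; have := hq j; omega
  refine ⟨fun l => T * v l, fun l => mul_nonneg hTpos.le (hv.1 l), ?_, hy, ?_⟩
  · rw [← Finset.mul_sum, hv.2, mul_one]
  intro l
  set y : J → ℝ := fun j => ∑ l, (T * v l) * A l j with hydef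
  have key : ∀ t : ℝ, 0 < t → t < 1 →
      ∑ j, q j * ((T * A l j - y j) / (y j + t * (T * A l j - y j))) ≤ 0 := by
    intro t ht0 ht1
    have hz : ∀ j, 0 < y j + t * (T * A l j - y j) := by
      intro j
      have h1 : 0 < (1 - t) * y j := mul_pos (by linarith) (hy j)
      have h2 : 0 ≤ t * (T * A l j) := mul_nonneg ht0.le (mul_nonneg hTpos.le (hA l j))
      linarith
    have hmem : ((1 - t) • v + t • (Pi.single l 1 : L → ℝ)) ∈ stdSimplex ℝ L :=
      convex_stdSimplex ℝ L hv (single_mem_stdSimplex ℝ l) (by linarith) ht0.le (by ring)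
    have h1 := hmax hmem
    have hyt : ∀ j, ∑ i, (T * ((1 - t) • v + t • (Pi.single l 1 : L → ℝ)) i) * A i j
        = y j + t * (T * A l j - y j) := by
      intro j
      have : ∑ i, (T * ((1 - t) • v + t • (Pi.single l 1 : L → ℝ)) i) * A i j
        = (1 - t) * ∑ i, T * v i * A i j + t * T * ∑ i, (Pi.single l 1 : L → ℝ) i * A i j := by
        rw [Finset.mul_sum, Finset.mul_sum, ← Finset.sum_add_distrib]
        refine Finset.sum_congr rfl fun i _ => ?_
        simp only [Pi.add_apply, Pi.smul_apply, smul_eq_mul]; ring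
      rw [this]
      have h2 : ∑ i, (Pi.single l 1 : L → ℝ) i * A i j = A l j := by
        simp [Pi.single_apply]
      rw [h2]; simp only [hydef]; ring
    simp only [Set.mem_setOf_eq, hyt] at h1
    change ∏ j, (y j + t * (T * A l j - y j)) ^ q j ≤ ∏ j, y j ^ q j at h1
    have h2 := Real.log_le_log (Finset.prod_pos fun j _ => pow_pos (hz j) _) h1
    rw [Real.log_prod (fun j _ => (pow_pos (hz j) _).ne'),
      Real.log_prod (fun j _ => (pow_pos (hy j) _).ne')] at h2
    simp only [Real.log_pow] at h2
    have h3 : ∑ j, q j * (t * ((T * A l j - y j) / (y j + t * (T * A l j - y j)))) ≤ 0 := by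
      refine le_trans (Finset.sum_le_sum (g := fun j =>
        q j * Real.log (y j + t * (T * A l j - y j)) - q j * Real.log (y j)) fun j _ => ?_) ?_
      · rw [← mul_sub]
        refine mul_le_mul_of_nonneg_left ?_ (Nat.cast_nonneg _)
        have := Real.log_le_sub_one_of_pos (div_pos (hy j) (hz j))
        rw [Real.log_div (hy j).ne' (hz j).ne'] at this
        have e : t * ((T * A l j - y j) / (y j + t * (T * A l j - y j)))
            = 1 - y j / (y j + t * (T * A l j - y j)) := by
          have := (hz j).ne'
          field_simp
          ring
        rw [e]
        change Real.log (y j) - _ ≤ y j / _ - 1 at this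
        linarith
      · rw [Finset.sum_sub_distrib]; linarith
    have e : ∑ j, q j * (t * ((T * A l j - y j) / (y j + t * (T * A l j - y j))))
        = t * ∑ j, q j * ((T * A l j - y j) / (y j + t * (T * A l j - y j))) := by
      rw [Finset.mul_sum]; exact Finset.sum_congr rfl fun j _ => by ring
    rw [e] at h3
    by_contra hcon
    push Not at hcon
    have := mul_pos ht0 hcon
    linarith
  have hlim : Filter.Tendsto (fun t : ℝ =>
      ∑ j, q j * ((T * A l j - y j) / (y j + t * (T * A l j - y j))))
      (nhdsWithin 0 (Set.Ioi 0))
      (nhds (∑ j, q j * ((T * A l j - y j) / (y j + 0 * (T * A l j - y j))))) := by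
    refine Filter.Tendsto.mono_left ?_ nhdsWithin_le_nhds
    refine tendsto_finsetSum _ fun j _ => ?_
    refine Filter.Tendsto.const_mul _ (Filter.Tendsto.div tendsto_const_nhds ?_ ?_)
    · exact Continuous.tendsto (by fun_prop) 0
    · simpa using (hy j).ne'
  have hfin := le_of_tendsto hlim (by
    filter_upwards [Ioo_mem_nhdsGT (zero_lt_one (α := ℝ))] with t ht using key t ht.1 ht.2)
  have e : ∑ j, q j * ((T * A l j - y j) / (y j + 0 * (T * A l j - y j)))
      = T * ∑ j, A l j * (q j / y j) - T := by
    rw [hT, Finset.mul_sum, ← Finset.sum_sub_distrib]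
    refine Finset.sum_congr rfl fun j _ => ?_
    have := (hy j).ne'
    change y j ≠ 0 at this
    rw [zero_mul, add_zero]
    field_simp
  rw [e] at hfin
  change ∑ j, A l j * (q j / y j) ≤ 1
  refine le_of_mul_le_mul_left ?_ hTpos
  linarith

/-- Store-Forward converges to proportional fairness: let `Q ∈ ℕ^J` with
`Q j ≥ 1` for every `j`.  The function `s ↦ ∑_j Q j * log (s j)` attains its maximum over
`P ∩ (0,∞)^J` (where `P = {s : s ≥ 0, ∀ l, ∑_j A l j * s j ≤ 1}`) at a unique point
`σPF`, and for every `j` the Store-Forward allocation converges to it: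
`Φ(cQ - e_j)/Φ(cQ) → σPF j` as `c → ∞` along the naturals. -/
theorem storeForward_tendsto_proportionalFairness
    {J L : Type*} [Fintype J] [Nonempty J] [Fintype L] [Nonempty L] [DecidableEq J]
    (A : L → J → ℝ) (hA : ∀ l j, 0 ≤ A l j)
    (hcol : ∀ j, ∃ l, 0 < A l j)
    (Q : J → ℕ) (hQ : ∀ j, 1 ≤ Q j) :
    ∃ σPF : J → ℝ,
      ((∀ j, 0 < σPF j) ∧ (∀ l, ∑ j, A l j * σPF j ≤ 1) ∧
        (∀ s : J → ℝ, (∀ j, 0 < s j) → (∀ l, ∑ j, A l j * s j ≤ 1) →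
          ∑ j, (Q j : ℝ) * Real.log (s j) ≤ ∑ j, (Q j : ℝ) * Real.log (σPF j)) ∧
        (∀ σ' : J → ℝ, (∀ j, 0 < σ' j) → (∀ l, ∑ j, A l j * σ' j ≤ 1) →
          (∀ s : J → ℝ, (∀ j, 0 < s j) → (∀ l, ∑ j, A l j * s j ≤ 1) →
            ∑ j, (Q j : ℝ) * Real.log (s j) ≤ ∑ j, (Q j : ℝ) * Real.log (σ' j)) →
          σ' = σPF)) ∧
      ∀ j, Filter.Tendsto
        (fun c : ℕ =>
          Phi A (fun j' => c * Q j' - if j' = j then 1 else 0) / Phi A (fun j' => c * Q j'))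
        Filter.atTop (nhds (σPF j)) := by
  obtain ⟨u, hu0, huT, hy, hfeas⟩ := exists_kkt A hA hcol Q hQ
  set y : J → ℝ := fun j => ∑ l, u l * A l j with hydef
  have hQ0 : ∀ j, (0:ℝ) < Q j := fun j => by exact_mod_cast hQ j
  have hy' : ∀ j, 0 < y j := hy
  have hdual : ∀ (s : J → ℝ) (K : ℝ), (∀ l, ∑ j, A l j * s j ≤ K) →
      ∑ j, y j * s j ≤ (∑ j, (Q j : ℝ)) * K := by
    intro s K hs
    rw [← huT, Finset.sum_mul]
    simp only [hydef, Finset.sum_mul]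
    rw [Finset.sum_comm]
    refine Finset.sum_le_sum fun l _ => ?_
    simp_rw [mul_assoc]
    rw [← Finset.mul_sum]
    exact mul_le_mul_of_nonneg_left (hs l) (hu0 l)
  have hlog : ∀ s : J → ℝ, (∀ j, 0 < s j) → ∀ j,
      (Q j : ℝ) * Real.log (s j) - Q j * Real.log (Q j / y j) ≤ y j * s j - Q j := by
    intro s hs j
    have h := Real.log_le_sub_one_of_pos (div_pos (hs j) (div_pos (hQ0 j) (hy' j)))
    rw [Real.log_div (hs j).ne' (div_pos (hQ0 j) (hy' j)).ne'] at h
    have h2 := mul_le_mul_of_nonneg_left h (hQ0 j).le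
    have e : (Q j : ℝ) * (s j / (Q j / y j) - 1) = y j * s j - Q j := by
      have := (hQ0 j).ne'
      field_simp
    rw [e] at h2
    linarith
  refine ⟨fun j => Q j / y j, ⟨fun j => div_pos (hQ0 j) (hy' j), hfeas, ?_, ?_⟩, ?_⟩
  · intro s hs hsP
    have h1 := hdual s 1 hsP
    have h2 := Finset.sum_le_sum fun j (_ : j ∈ Finset.univ) => hlog s hs j
    rw [Finset.sum_sub_distrib, Finset.sum_sub_distrib] at h2
    linarith
  · intro s hs hsP hmax
    have h1 := hdual s 1 hsP
    have h3 := hmax (fun j => Q j / y j) (fun j => div_pos (hQ0 j) (hy' j)) hfeas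
    by_contra hne
    obtain ⟨j, hj⟩ := Function.ne_iff.1 hne
    have hstrict : (Q j : ℝ) * Real.log (s j) - Q j * Real.log (Q j / y j) < y j * s j - Q j := by
      have hσ := div_pos (hQ0 j) (hy' j)
      have h := Real.log_lt_sub_one_of_pos (div_pos (hs j) hσ)
        (fun h => hj ((div_eq_one_iff_eq hσ.ne').1 h))
      rw [Real.log_div (hs j).ne' hσ.ne'] at h
      have h2 := mul_lt_mul_of_pos_left h (hQ0 j)
      have e : (Q j : ℝ) * (s j / (Q j / y j) - 1) = y j * s j - Q j := by
        have := (hQ0 j).ne'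
        field_simp
      rw [e] at h2
      linarith
    have h2 := Finset.sum_lt_sum (fun j (_ : j ∈ Finset.univ) => hlog s hs j)
      ⟨j, Finset.mem_univ j, hstrict⟩
    rw [Finset.sum_sub_distrib, Finset.sum_sub_distrib] at h2
    linarith
  · intro j
    -- normalized ratios
    have main : ∀ c : ℕ, 1 ≤ c →
        (Phi A (c • Q - Pi.single j 1) / Phi A (c • Q) * (y j / Q j) - 1) ^ 2
          ≤ ((∑ j, (Q j : ℝ)) / Q j) * (((Fintype.card L : ℝ) / Q j) * (1 / c)) := by
      intro c hc
      have hc0 : (0:ℝ) < c := by exact_mod_cast hc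
      set N : J → ℕ := c • Q with hN
      have hNj : ∀ i, (N i : ℝ) = c * Q i := fun i => by simp [hN]
      have hN1 : ∀ i, 1 ≤ N i := fun i => by
        simp only [hN, Pi.smul_apply, smul_eq_mul]
        exact Nat.mul_pos hc (hQ i)
      have hΦ : 0 < Phi A N := Phi_pos A hA hcol N
      set a : J → ℝ := fun i => Phi A (N - Pi.single i 1) / Phi A N * (y i / Q i) with ha
      set b : J → ℝ := fun i => (N i + 1) * Phi A (N + Pi.single i 1) * (Q i / y i)
        / (Phi A N * N i) with hb
      have ha0 : ∀ i, 0 < a i := fun i =>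
        mul_pos (div_pos (Phi_pos A hA hcol _) hΦ) (div_pos (hy' i) (hQ0 i))
      have hab : ∀ i, 1 ≤ a i * b i := by
        intro i
        have h := Phi_logconvex A hA (N - Pi.single i 1) i
        have hi : N - Pi.single i 1 + Pi.single i 1 = N := by
          funext k
          by_cases hk : k = i
          · subst hk; simp; have := hN1 k; omega
          · simp [hk]
        have hi2 : (((N - Pi.single i 1 : J → ℕ) i : ℕ) : ℝ) = N i - 1 := by
          simp [Nat.cast_sub (hN1 i)]
        rw [hi, hi2] at h
        have hNi : (0:ℝ) < N i := by exact_mod_cast hN1 i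
        have e : a i * b i = ((N i + 1) * Phi A (N + Pi.single i 1) * Phi A (N - Pi.single i 1))
            / (N i * Phi A N ^ 2) := by
          simp only [ha, hb]
          have := (hQ0 i).ne'
          have := (hy' i).ne'
          field_simp
        rw [e, one_le_div (by positivity)]
        calc _ = ((N i : ℝ) - 1 + 1) * Phi A N ^ 2 := by ring
          _ ≤ _ := h
          _ = _ := by ring
      have hasum : ∑ i, (Q i : ℝ) * a i ≤ ∑ i, (Q i : ℝ) := by
        have h := hdual (fun i => Phi A (N - Pi.single i 1)) (Phi A N) (Phi_feas A hA N hN1)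
        have e : ∑ i, (Q i : ℝ) * a i = (∑ i, y i * Phi A (N - Pi.single i 1)) / Phi A N := by
          rw [Finset.sum_div]
          refine Finset.sum_congr rfl fun i _ => ?_
          simp only [ha]
          have := (hQ0 i).ne'
          field_simp
        rw [e, div_le_iff₀ hΦ]
        exact h
      have hbsum : ∑ i, (Q i : ℝ) * b i ≤ ∑ i, (Q i : ℝ) + Fintype.card L * (1 / c) := by
        have h := Phi_total A hA N (fun i => Q i / y i) hfeas
        have e : ∑ i, (Q i : ℝ) * b i =
            (∑ i, (N i + 1) * Phi A (N + Pi.single i 1) * (Q i / y i)) / (Phi A N * c) := by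
          rw [Finset.sum_div]
          refine Finset.sum_congr rfl fun i _ => ?_
          simp only [hb]
          rw [hNj]
          have := (hQ0 i).ne'
          have := (hy' i).ne'
          field_simp
        rw [e, div_le_iff₀ (by positivity)]
        refine h.trans (le_of_eq ?_)
        simp_rw [hNj]
        rw [← Finset.mul_sum]
        field_simp
      have hterm : ∀ i, 0 ≤ (Q i : ℝ) * (a i + b i - 2) := by
        intro i
        refine mul_nonneg (hQ0 i).le ?_
        have h1 := hab i
        have h2 := ha0 i
        have h3 : 0 < b i := by
          by_contra hcon
          push Not at hcon
          nlinarith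
        nlinarith [sq_nonneg (a i - b i)]
      have hj1 : (Q j : ℝ) * (a j + b j - 2) ≤ Fintype.card L * (1 / c) := by
        refine (Finset.single_le_sum (fun i _ => hterm i) (Finset.mem_univ j)).trans ?_
        have : ∑ i, (Q i : ℝ) * (a i + b i - 2)
            = ∑ i, (Q i : ℝ) * a i + ∑ i, (Q i : ℝ) * b i - 2 * ∑ i, (Q i : ℝ) := by
          rw [Finset.mul_sum, ← Finset.sum_add_distrib, ← Finset.sum_sub_distrib]
          exact Finset.sum_congr rfl fun i _ => by ring
        rw [this]; linarith
      have hj2 : (Q j : ℝ) * a j ≤ ∑ i, (Q i : ℝ) :=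
        (Finset.single_le_sum (f := fun i => (Q i : ℝ) * a i)
          (fun i _ => mul_nonneg (hQ0 i).le (ha0 i).le) (Finset.mem_univ j)).trans hasum
      have hj3 : a j ≤ (∑ i, (Q i : ℝ)) / Q j := by
        rw [le_div_iff₀ (hQ0 j)]; linarith
      have hj4 : a j + b j - 2 ≤ ((Fintype.card L : ℝ) / Q j) * (1 / c) := by
        rw [div_mul_eq_mul_div, le_div_iff₀ (hQ0 j)]; linarith
      change (a j - 1) ^ 2 ≤ _
      have h5 : 0 ≤ a j + b j - 2 := by
        have := hterm j
        exact nonneg_of_mul_nonneg_right this (hQ0 j)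
      calc (a j - 1) ^ 2 ≤ a j * (a j + b j - 2) := by nlinarith [hab j]
        _ ≤ _ := mul_le_mul hj3 hj4 h5 ((ha0 j).le.trans hj3)
    have hsq : Filter.Tendsto (fun c : ℕ =>
        (Phi A (c • Q - Pi.single j 1) / Phi A (c • Q) * (y j / Q j) - 1) ^ 2)
        Filter.atTop (nhds 0) := by
      have hz : Filter.Tendsto (fun c : ℕ =>
          ((∑ j, (Q j : ℝ)) / Q j) * (((Fintype.card L : ℝ) / Q j) * (1 / (c:ℝ))))
          Filter.atTop (nhds 0) := by
        have := (tendsto_one_div_atTop_nhds_zero_nat (𝕜 := ℝ)).const_mul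
          ((Fintype.card L : ℝ) / Q j)
        have := this.const_mul ((∑ j, (Q j : ℝ)) / Q j)
        simpa using this
      refine squeeze_zero' (Filter.Eventually.of_forall fun c => sq_nonneg _) ?_ hz
      filter_upwards [Filter.eventually_ge_atTop 1] with c hc using main c hc
    have habs : Filter.Tendsto (fun c : ℕ =>
        Phi A (c • Q - Pi.single j 1) / Phi A (c • Q) * (y j / Q j) - 1)
        Filter.atTop (nhds 0) := by
      have h := hsq.sqrt
      simp only [Real.sqrt_sq_eq_abs, Real.sqrt_zero] at h
      exact (tendsto_zero_iff_abs_tendsto_zero _).2 h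
    have hfin := (habs.add_const 1).mul_const (Q j / y j)
    rw [zero_add, one_mul] at hfin
    refine hfin.congr fun c => ?_
    have e1 : (c • Q - Pi.single j 1 : J → ℕ) = fun j' => c * Q j' - if j' = j then 1 else 0 := by
      funext i
      simp [Pi.single_apply]
    have e2 : (c • Q : J → ℕ) = fun j' => c * Q j' := by
      funext i; simp
    rw [e1, e2]
    have := (hQ0 j).ne'
    have := (hy' j).ne'
    field_simp
    ring
end

section
/- Logarithmic asymptotics of the Store-Forward normalizing constant: for every Q ∈ ℕ^J with Q_j ≥ 1 for all j, lim_{c → ∞, c ∈ ℕ} (1/c) · log Φ(cQ) = − max { ∑_{j ∈ J} Q_j log s_j : s ∈ P, s_j > 0 for all j }. -/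
open scoped BigOperators Classical

open Filter Topology Finset in
theorem sf_factorial_limit (m : ℕ → ℕ) (x : ℝ)
    (hm : Tendsto (fun c : ℕ => (m c : ℝ) / (c : ℝ)) atTop (𝓝 x)) :
    Tendsto (fun c : ℕ => (Real.log ((m c).factorial : ℝ) - (m c : ℝ) * Real.log c) / (c : ℝ))
      atTop (𝓝 (x * Real.log x - x)) := by
  have hb : ∀ n : ℕ, 0 ≤ Real.log (n.factorial : ℝ) - (n * Real.log n - n) ∧
      Real.log (n.factorial : ℝ) - (n * Real.log n - n) ≤ 1 + Real.log (n + 1) := by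
    intro n
    rcases Nat.eq_zero_or_pos n with rfl | hn
    · simp
    · have hn' : (1 : ℝ) ≤ n := by exact_mod_cast hn
      have hl : 0 ≤ Real.log n := Real.log_nonneg hn'
      constructor
      · have h1 := Stirling.le_log_factorial_stirling hn.ne'
        have h2 : 0 ≤ Real.log (2 * Real.pi) :=
          Real.log_nonneg (by nlinarith [Real.pi_gt_three])
        linarith
      · have h1 := Stirling.log_stirlingSeq_formula n
        have h2 : Real.log (Stirling.stirlingSeq n) ≤ Real.log (Stirling.stirlingSeq 1) := by
          have := Stirling.log_stirlingSeq'_antitone (Nat.zero_le (n - 1))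
          simpa [Nat.succ_eq_add_one, Nat.sub_add_cancel hn] using this
        rw [Stirling.stirlingSeq_one, Real.log_div (by positivity) (by positivity), Real.log_exp,
          Real.log_sqrt (by norm_num)] at h2
        rw [Real.log_div (by positivity) (by positivity), Real.log_exp,
          Real.log_mul (by norm_num) (by positivity)] at h1
        have h3 : Real.log n ≤ Real.log (n + 1) := Real.log_le_log (by positivity) (by linarith)
        linarith
  have hrem : Tendsto (fun c : ℕ =>
      (Real.log ((m c).factorial : ℝ) - (m c * Real.log (m c) - m c)) / (c : ℝ))
      atTop (𝓝 0) := by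
    have hup : Tendsto (fun c : ℕ => (1 + Real.log (|x| + 3)) / (c : ℝ) + Real.log c / c)
        atTop (𝓝 0) := by
      have h1 : Tendsto (fun c : ℕ => (1 + Real.log (|x| + 3)) / (c : ℝ)) atTop (𝓝 0) :=
        tendsto_const_div_atTop_nhds_zero_nat _
      have h2 : Tendsto (fun c : ℕ => Real.log c / (c : ℝ)) atTop (𝓝 0) := by
        have := Real.isLittleO_log_id_atTop.tendsto_div_nhds_zero.comp
          (tendsto_natCast_atTop_atTop (R := ℝ))
        exact this
      simpa using h1.add h2
    refine tendsto_of_tendsto_of_tendsto_of_le_of_le' tendsto_const_nhds hup ?_ ?_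
    · exact Eventually.of_forall fun c => div_nonneg (hb _).1 (Nat.cast_nonneg _)
    · filter_upwards [eventually_ge_atTop 1,
        hm.eventually (eventually_le_nhds (show x < |x| + 1 by linarith [le_abs_self x]))]
        with c hc hmc
      have hc' : (1 : ℝ) ≤ c := by exact_mod_cast hc
      have hc0 : (0 : ℝ) < c := by linarith
      rw [div_le_iff₀ hc0] at hmc
      rw [← add_div]
      refine div_le_div_of_nonneg_right ?_ hc0.le
      refine (hb _).2.trans ?_
      rw [add_assoc, ← Real.log_mul (by positivity) (by positivity)]
      gcongr
      nlinarith [abs_nonneg x]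
  have hmain : Tendsto (fun c : ℕ => (m c : ℝ) / c * Real.log ((m c : ℝ) / c) - (m c : ℝ) / c)
      atTop (𝓝 (x * Real.log x - x)) :=
    ((Real.continuous_mul_log.tendsto x).comp hm).sub hm
  have := hrem.add hmain
  rw [zero_add] at this
  refine this.congr' ?_
  filter_upwards [eventually_ge_atTop 1] with c hc
  have hc0 : (c : ℝ) ≠ 0 := by positivity
  rcases Nat.eq_zero_or_pos (m c) with h | h
  · simp [h]
  · rw [Real.log_div (by positivity) hc0]
    field_simp
    ring

open Filter Topology Finset in
theorem sf_rounding {L : Type*} [Fintype L] (x : L → ℝ) (q : ℕ) (hq : 1 ≤ q)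
    (hx : ∀ l, 0 ≤ x l) (hs : ∑ l, x l = q) :
    ∃ m : ℕ → L → ℕ, (∀ c, ∑ l, m c l = c * q) ∧ (∀ c l, x l = 0 → m c l = 0) ∧
      ∀ l, Tendsto (fun c : ℕ => (m c l : ℝ) / (c : ℝ)) atTop (𝓝 (x l)) := by
  obtain ⟨l0, hl0⟩ : ∃ l, x l ≠ 0 := by
    by_contra! h
    simp only [h, sum_const_zero] at hs
    have : (1 : ℝ) ≤ q := by exact_mod_cast hq
    linarith
  have hle : ∀ c : ℕ, ∑ l, ⌊x l * c⌋₊ ≤ c * q := by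
    intro c
    have : ((∑ l, ⌊x l * c⌋₊ : ℕ) : ℝ) ≤ ((c * q : ℕ) : ℝ) := by
      push_cast
      rw [← hs, mul_comm, sum_mul]
      exact sum_le_sum fun l _ => Nat.floor_le (mul_nonneg (hx l) (Nat.cast_nonneg _))
    exact_mod_cast this
  have hfl : ∀ l, Tendsto (fun c : ℕ => (⌊x l * c⌋₊ : ℝ) / (c : ℝ)) atTop (𝓝 (x l)) :=
    fun l => (tendsto_nat_floor_mul_div_atTop (hx l)).comp
      (tendsto_natCast_atTop_atTop (R := ℝ))
  refine ⟨fun c l => ⌊x l * c⌋₊ + if l = l0 then c * q - ∑ l, ⌊x l * c⌋₊ else 0, ?_, ?_, ?_⟩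
  · intro c
    rw [sum_add_distrib]
    simp only [sum_ite_eq', mem_univ, if_true]
    have := hle c
    omega
  · intro c l h
    have : l ≠ l0 := fun e => hl0 (e ▸ h)
    simp [h, this]
  · intro l
    by_cases h : l = l0
    · have h1 : Tendsto (fun c : ℕ => (⌊x l * c⌋₊ : ℝ) / (c : ℝ) +
          ((q : ℝ) - ∑ l, (⌊x l * c⌋₊ : ℝ) / (c : ℝ))) atTop (𝓝 (x l + (q - ∑ l, x l))) :=
        (hfl l).add (tendsto_const_nhds.sub (tendsto_finsetSum _ fun l _ => hfl l))
      rw [hs, sub_self, add_zero] at h1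
      refine h1.congr' ?_
      filter_upwards [eventually_ge_atTop 1] with c hc
      have hc0 : (c : ℝ) ≠ 0 := by positivity
      rw [if_pos h, Nat.cast_add, Nat.cast_sub (hle c), ← sum_div]
      push_cast
      field_simp
    · simpa [h] using hfl l

open Finset in
/-- Summand of `Phi`. -/
noncomputable def sfTerm {J L : Type*} [Fintype J] [Fintype L]
    (A : L → J → ℝ) (m : L → J → ℕ) : ℝ :=
  ∏ l, (((∑ j, m l j).factorial : ℝ) / ∏ j, ((m l j).factorial : ℝ)) * ∏ j, A l j ^ m l j

open Finset in
theorem sf_term_nonneg {J L : Type*} [Fintype J] [Fintype L]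
    (A : L → J → ℝ) (hA : ∀ l j, 0 ≤ A l j) (m : L → J → ℕ) : 0 ≤ sfTerm A m :=
  prod_nonneg fun l _ => mul_nonneg (by positivity)
    (prod_nonneg fun j _ => pow_nonneg (hA l j) _)

open Finset in
theorem sf_multinomial_le {J : Type*} [Fintype J] (a : J → ℝ) (ha : ∀ j, 0 ≤ a j)
    (hs : ∑ j, a j ≤ 1) (m : J → ℕ) :
    (((∑ j, m j).factorial : ℝ) / ∏ j, ((m j).factorial : ℝ)) * ∏ j, a j ^ m j ≤ 1 := by
  have h1 : (((∑ j, m j).factorial : ℝ) / ∏ j, ((m j).factorial : ℝ))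
      = (Nat.multinomial univ m : ℝ) := by
    rw [div_eq_iff (by positivity), ← Nat.multinomial_spec univ m]
    push_cast
    ring
  rw [h1]
  have h2 := sum_pow_eq_sum_piAntidiag univ a (∑ j, m j)
  have h3 : (Nat.multinomial univ m : ℝ) * ∏ j, a j ^ m j ≤ (∑ j, a j) ^ (∑ j, m j) := by
    rw [h2]
    refine single_le_sum (f := fun k : J → ℕ => (Nat.multinomial univ k : ℝ) * ∏ j, a j ^ k j)
      (fun k _ => mul_nonneg (Nat.cast_nonneg _) (prod_nonneg fun j _ => pow_nonneg (ha j) _)) ?_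
    simp
  exact h3.trans (pow_le_one₀ (sum_nonneg fun j _ => ha j) hs)

open Finset in
theorem sf_term_le {J L : Type*} [Fintype J] [Fintype L]
    (A : L → J → ℝ) (hA : ∀ l j, 0 ≤ A l j) (s : J → ℝ) (hs : ∀ j, 0 < s j)
    (hP : ∀ l, ∑ j, A l j * s j ≤ 1) (q : J → ℕ) (m : L → J → ℕ)
    (hm : ∀ j, ∑ l, m l j = q j) : sfTerm A m * ∏ j, s j ^ q j ≤ 1 := by
  have h1 : ∏ j, s j ^ q j = ∏ l, ∏ j, s j ^ m l j := by
    rw [prod_comm]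
    refine prod_congr rfl fun j _ => ?_
    rw [prod_pow_eq_pow_sum, hm]
  rw [h1, sfTerm, ← prod_mul_distrib]
  refine prod_le_one (fun l _ => ?_) (fun l _ => ?_)
  · exact mul_nonneg (mul_nonneg (by positivity)
      (prod_nonneg fun j _ => pow_nonneg (hA l j) _)) (prod_nonneg fun j _ => pow_nonneg (hs j).le _)
  · rw [mul_assoc, ← prod_mul_distrib]
    simp_rw [← mul_pow]
    exact sf_multinomial_le _ (fun j => mul_nonneg (hA l j) (hs j).le) (hP l) _

open Finset in
theorem sf_Phi_eq {J L : Type*} [Fintype J] [Fintype L] (A : L → J → ℝ) (q : J → ℕ) :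
    Phi A q = ∑ m ∈ Fintype.piFinset (fun _ : L => Fintype.piFinset fun j => range (q j + 1)),
      if (∀ l j, A l j = 0 → m l j = 0) ∧ (∀ j, ∑ l, m l j = q j) then sfTerm A m else 0 := by
  unfold Phi sfTerm
  refine tsum_eq_sum fun m hm => if_neg fun h => hm ?_
  simp only [Fintype.mem_piFinset, mem_range]
  intro l j
  rw [← h.2 j]
  exact Nat.lt_succ_of_le (single_le_sum (f := fun l => m l j) (fun _ _ => Nat.zero_le _) (mem_univ l))

open Finset in
theorem sf_Phi_le {J L : Type*} [Fintype J] [Fintype L]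
    (A : L → J → ℝ) (hA : ∀ l j, 0 ≤ A l j) (s : J → ℝ) (hs : ∀ j, 0 < s j)
    (hP : ∀ l, ∑ j, A l j * s j ≤ 1) (q : J → ℕ) :
    Phi A q * ∏ j, s j ^ q j ≤ ∏ _l : L, ∏ j, ((q j : ℝ) + 1) := by
  rw [sf_Phi_eq, sum_mul]
  refine (sum_le_card_nsmul _ _ 1 ?_).trans ?_
  · intro m _
    split_ifs with h
    · exact sf_term_le A hA s hs hP q m h.2
    · simp
  · simp

open Finset in
theorem sf_term_le_Phi {J L : Type*} [Fintype J] [Fintype L]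
    (A : L → J → ℝ) (hA : ∀ l j, 0 ≤ A l j) (q : J → ℕ) (m : L → J → ℕ)
    (h0 : ∀ l j, A l j = 0 → m l j = 0) (hm : ∀ j, ∑ l, m l j = q j) :
    sfTerm A m ≤ Phi A q := by
  rw [sf_Phi_eq]
  refine (le_of_eq ?_).trans (single_le_sum (f := fun m : L → J → ℕ =>
    if (∀ l j, A l j = 0 → m l j = 0) ∧ (∀ j, ∑ l, m l j = q j) then sfTerm A m else 0)
    (a := m) ?_ ?_)
  · rw [if_pos ⟨h0, hm⟩]
  · intro m _
    split_ifs
    · exact sf_term_nonneg A hA m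
    · exact le_rfl
  · simp only [Fintype.mem_piFinset, mem_range]
    intro l j
    rw [← hm j]
    exact Nat.lt_succ_of_le
      (single_le_sum (f := fun l => m l j) (fun _ _ => Nat.zero_le _) (mem_univ l))

open Finset in
theorem sf_term_pos {J L : Type*} [Fintype J] [Fintype L]
    (A : L → J → ℝ) (hA : ∀ l j, 0 ≤ A l j) (m : L → J → ℕ)
    (h0 : ∀ l j, A l j = 0 → m l j = 0) : 0 < sfTerm A m := by
  refine prod_pos fun l _ => mul_pos (by positivity) (prod_pos fun j _ => ?_)
  rcases (hA l j).eq_or_lt with h | h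
  · rw [h0 l j h.symm]; simp
  · positivity

open Finset in
theorem sf_log_term {J L : Type*} [Fintype J] [Fintype L]
    (A : L → J → ℝ) (hA : ∀ l j, 0 ≤ A l j) (m : L → J → ℕ)
    (h0 : ∀ l j, A l j = 0 → m l j = 0) (t : ℝ) :
    Real.log (sfTerm A m) = ∑ l, ((Real.log ((∑ j, m l j).factorial : ℝ) - ((∑ j, m l j : ℕ) : ℝ) * t)
      - ∑ j, (Real.log ((m l j).factorial : ℝ) - (m l j : ℝ) * t)
      + ∑ j, (m l j : ℝ) * Real.log (A l j)) := by
  have hp : ∀ l j, A l j ^ m l j ≠ 0 := by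
    intro l j
    by_cases h : A l j = 0
    · rw [h0 l j h]; simp
    · exact pow_ne_zero _ h
  have hf : ∀ l, ∏ j, ((m l j).factorial : ℝ) ≠ 0 := fun l => by positivity
  have hg : ∀ l, ((∑ j, m l j).factorial : ℝ) ≠ 0 := fun l => by positivity
  unfold sfTerm
  rw [Real.log_prod]
  · refine sum_congr rfl fun l _ => ?_
    rw [Real.log_mul (div_ne_zero (hg l) (hf l)) (prod_ne_zero_iff.2 fun j _ => hp l j),
      Real.log_div (hg l) (hf l), Real.log_prod (fun j _ => by positivity),
      Real.log_prod (fun j _ => hp l j), sum_sub_distrib, ← sum_mul]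
    push_cast
    simp only [Real.log_pow]
    ring
  · intro l _
    exact mul_ne_zero (div_ne_zero (hg l) (hf l)) (prod_ne_zero_iff.2 fun j _ => hp l j)

open Finset in
theorem sf_exists_max {J L : Type*} [Fintype J] [Fintype L]
    (A : L → J → ℝ) (hA : ∀ l j, 0 ≤ A l j) (hcol : ∀ j, ∃ l, 0 < A l j)
    (Q : J → ℕ) (hQ : ∀ j, 1 ≤ Q j) :
    ∃ s : J → ℝ, (∀ j, 0 < s j) ∧ (∀ l, ∑ j, A l j * s j ≤ 1) ∧
      ∀ t : J → ℝ, (∀ j, 0 < t j) → (∀ l, ∑ j, A l j * t j ≤ 1) →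
        ∑ j, (Q j : ℝ) * Real.log (t j) ≤ ∑ j, (Q j : ℝ) * Real.log (s j) := by
  set P : Set (J → ℝ) := {s | (∀ j, 0 ≤ s j) ∧ ∀ l, ∑ j, A l j * s j ≤ 1} with hP
  have hclosed : IsClosed P := by
    have h1 : IsClosed {s : J → ℝ | ∀ j, 0 ≤ s j} := by
      simp only [Set.ofPred_forall]
      exact isClosed_iInter fun j => isClosed_le continuous_const (continuous_apply j)
    have h2 : IsClosed {s : J → ℝ | ∀ l, ∑ j, A l j * s j ≤ 1} := by
      simp only [Set.ofPred_forall]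
      exact isClosed_iInter fun l => isClosed_le (by fun_prop) continuous_const
    exact h1.inter h2
  choose lc hlc using hcol
  have hsub : P ⊆ Set.Icc (fun _ => 0) (fun j => 1 / A (lc j) j) := by
    intro s hs
    refine ⟨hs.1, fun j => ?_⟩
    rw [le_div_iff₀ (hlc j), mul_comm]
    exact (single_le_sum (f := fun j' => A (lc j) j' * s j')
      (fun j' _ => mul_nonneg (hA _ _) (hs.1 j')) (mem_univ j)).trans (hs.2 _)
  have hcomp : IsCompact P := isCompact_Icc.of_isClosed_subset hclosed hsub
  -- an interior point
  set D : ℝ := 1 + ∑ l, ∑ j, A l j with hD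
  have hDs : 0 ≤ ∑ l, ∑ j, A l j := sum_nonneg fun l _ => sum_nonneg fun j _ => hA l j
  have hD0 : 0 < D := by linarith
  have hs0 : (fun _ : J => 1 / D) ∈ P := by
    refine ⟨fun _ => by positivity, fun l => ?_⟩
    rw [← sum_mul, mul_one_div, div_le_one hD0]
    have := single_le_sum (f := fun l => ∑ j, A l j)
      (fun l _ => sum_nonneg fun j _ => hA l j) (mem_univ l)
    linarith
  obtain ⟨s, hsP, hmax⟩ := hcomp.exists_isMaxOn ⟨_, hs0⟩
    (f := fun s : J → ℝ => ∏ j, s j ^ Q j) (by fun_prop)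
  have hmax' : ∀ t ∈ P, ∏ j, t j ^ Q j ≤ ∏ j, s j ^ Q j := fun t ht => hmax ht
  have hpos : 0 < ∏ j, s j ^ Q j :=
    lt_of_lt_of_le (prod_pos fun j _ => by positivity) (hmax' _ hs0)
  have hspos : ∀ j, 0 < s j := by
    intro j
    refine (hsP.1 j).lt_of_ne fun h => ?_
    have : ∏ j, s j ^ Q j = 0 :=
      prod_eq_zero (mem_univ j) (by rw [← h]; exact zero_pow (by have := hQ j; omega))
    linarith
  refine ⟨s, hspos, hsP.2, fun t ht htP => ?_⟩
  have h := hmax' t ⟨fun j => (ht j).le, htP⟩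
  have h' := Real.log_le_log (prod_pos fun j _ => pow_pos (ht j) _) h
  rw [Real.log_prod (fun j _ => (pow_pos (ht j) _).ne'),
    Real.log_prod (fun j _ => (pow_pos (hspos j) _).ne')] at h'
  simpa only [Real.log_pow] using h'

open Finset Filter Topology in
theorem sf_first_order {J L : Type*} [Fintype J] [Fintype L]
    (A : L → J → ℝ) (Q : J → ℕ) (s : J → ℝ) (hs : ∀ j, 0 < s j)
    (hsP : ∀ l, ∑ j, A l j * s j ≤ 1)
    (hmax : ∀ t : J → ℝ, (∀ j, 0 < t j) → (∀ l, ∑ j, A l j * t j ≤ 1) →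
        ∑ j, (Q j : ℝ) * Real.log (t j) ≤ ∑ j, (Q j : ℝ) * Real.log (s j))
    (r : J → ℝ) (hr : ∀ j, 0 ≤ r j) (hrP : ∀ l, ∑ j, A l j * r j ≤ 1) :
    ∑ j, (Q j : ℝ) / s j * r j ≤ ∑ j, (Q j : ℝ) := by
  have hlim : Tendsto (fun t : ℝ => ∑ j, (Q j : ℝ) * (r j - s j) / (s j + t * (r j - s j)))
      (𝓝[>] 0) (𝓝 (∑ j, (Q j : ℝ) * (r j - s j) / (s j + 0 * (r j - s j)))) := by
    refine tendsto_finsetSum _ fun j _ => ?_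
    refine Tendsto.div tendsto_const_nhds ?_ (by simpa using (hs j).ne')
    have : Continuous fun t : ℝ => s j + t * (r j - s j) := by fun_prop
    exact (this.tendsto 0).mono_left nhdsWithin_le_nhds
  have hle : ∑ j, (Q j : ℝ) * (r j - s j) / (s j + 0 * (r j - s j)) ≤ 0 := by
    refine le_of_tendsto hlim ?_
    filter_upwards [Ioo_mem_nhdsGT (show (0 : ℝ) < 1 by norm_num)] with t ht
    have hpos : ∀ j, 0 < s j + t * (r j - s j) := by
      intro j
      have h1 := mul_pos (sub_pos.2 ht.2) (hs j)
      have h2 := mul_nonneg ht.1.le (hr j)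
      nlinarith
    have h := hmax (fun j => s j + t * (r j - s j)) hpos ?_
    · have h3 : t * ∑ j, (Q j : ℝ) * (r j - s j) / (s j + t * (r j - s j)) ≤
          ∑ j, (Q j : ℝ) * Real.log (s j + t * (r j - s j)) - ∑ j, (Q j : ℝ) * Real.log (s j) := by
        rw [mul_sum, ← sum_sub_distrib]
        refine sum_le_sum fun j _ => ?_
        rw [← mul_sub, ← Real.log_div (hpos j).ne' (hs j).ne']
        have h4 := Real.one_sub_inv_le_log_of_pos (div_pos (hpos j) (hs j))
        have h5 : t * ((Q j : ℝ) * (r j - s j) / (s j + t * (r j - s j))) =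
            Q j * (1 - ((s j + t * (r j - s j)) / s j)⁻¹) := by
          have := (hpos j).ne'
          have := (hs j).ne'
          rw [inv_div]
          field_simp
          ring
        rw [h5]
        exact mul_le_mul_of_nonneg_left h4 (Nat.cast_nonneg _)
      have h6 : t * ∑ j, (Q j : ℝ) * (r j - s j) / (s j + t * (r j - s j)) ≤ 0 := by linarith
      by_contra! hc
      nlinarith [mul_pos ht.1 hc]
    · intro l
      have : ∑ j, A l j * (s j + t * (r j - s j)) =
          (1 - t) * ∑ j, A l j * s j + t * ∑ j, A l j * r j := by
        rw [mul_sum, mul_sum, ← sum_add_distrib]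
        exact sum_congr rfl fun j _ => by ring
      rw [this]
      nlinarith [mul_le_mul_of_nonneg_left (hsP l) (sub_nonneg.2 ht.2.le),
        mul_le_mul_of_nonneg_left (hrP l) ht.1.le]
  have heq : ∑ j, (Q j : ℝ) * (r j - s j) / (s j + 0 * (r j - s j)) =
      ∑ j, (Q j : ℝ) / s j * r j - ∑ j, (Q j : ℝ) := by
    rw [← sum_sub_distrib]
    refine sum_congr rfl fun j _ => ?_
    have := (hs j).ne'
    rw [zero_mul, add_zero]
    field_simp
  linarith

open Finset Filter Topology in
theorem sf_duality {J L : Type*} [Fintype J] [Fintype L] [Nonempty L]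
    (A : L → J → ℝ) (hA : ∀ l j, 0 ≤ A l j) (w : J → ℝ) (N : ℝ) (hN : 0 < N)
    (h : ∀ r : J → ℝ, (∀ j, 0 ≤ r j) → (∀ l, ∑ j, A l j * r j ≤ 1) → ∑ j, w j * r j ≤ N) :
    ∃ lam : L → ℝ, (∀ l, 0 ≤ lam l) ∧ ∑ l, lam l = N ∧ ∀ j, w j ≤ ∑ l, lam l * A l j := by
  let T : (L → ℝ) →ₗ[ℝ] (J → ℝ) :=
    { toFun := fun p j => ∑ l, N * p l * A l j
      map_add' := by
        intro p q; ext j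
        simp only [Pi.add_apply, ← sum_add_distrib]
        exact sum_congr rfl fun l _ => by ring
      map_smul' := by
        intro a p; ext j
        simp only [Pi.smul_apply, smul_eq_mul, RingHom.id_apply, mul_sum]
        exact sum_congr rfl fun l _ => by ring }
  have hT : ∀ p j, T p j = ∑ l, N * p l * A l j := fun p j => rfl
  by_contra! hcon
  have hdisj : Disjoint (T '' stdSimplex ℝ L) (Set.Ici w) := by
    rw [Set.disjoint_left]
    rintro _ ⟨p, hp, rfl⟩ hw
    obtain ⟨j, hj⟩ := hcon (fun l => N * p l) (fun l => mul_nonneg hN.le (hp.1 l))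
      (by rw [← mul_sum, hp.2, mul_one])
    exact absurd (hw j) (not_le.2 hj)
  obtain ⟨f, u, v, hK, huv, hW⟩ := geometric_hahn_banach_compact_closed
    ((convex_stdSimplex ℝ L).linear_image T)
    ((isCompact_stdSimplex ℝ L).image T.continuous_of_finiteDimensional)
    (convex_Ici w) isClosed_Ici hdisj
  set g : J → ℝ := fun j => f (Pi.single j 1) with hg
  have hf : ∀ y : J → ℝ, f y = ∑ j, y j * g j := by
    intro y
    conv_lhs => rw [pi_eq_sum_univ' y]
    rw [map_sum]
    refine sum_congr rfl fun j _ => ?_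
    rw [map_smul, smul_eq_mul]
  have hg0 : ∀ j, 0 ≤ g j := by
    intro j
    by_contra! hneg
    have hwv := hW w (Set.mem_Ici.2 le_rfl)
    have hk : 0 ≤ (f w - v) / (- g j) := div_nonneg (by linarith) (by linarith)
    have := hW (w + ((f w - v) / (- g j)) • Pi.single j 1) (by
      rw [Set.mem_Ici]
      refine le_add_of_nonneg_right (smul_nonneg hk ?_)
      rw [Pi.single_nonneg]; norm_num)
    rw [map_add, map_smul, smul_eq_mul] at this
    change v < f w + (f w - v) / (- g j) * g j at this
    have e : (f w - v) / (- g j) * g j = -(f w - v) := by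
      have := hneg.ne
      field_simp
    linarith
  have hfw : v < ∑ j, w j * g j := by
    rw [← hf]; exact hW w (Set.mem_Ici.2 le_rfl)
  have hl : ∀ l, N * ∑ j, A l j * g j < u := by
    intro l
    have := hK _ ⟨Pi.single l 1, single_mem_stdSimplex ℝ l, rfl⟩
    rw [hf] at this
    refine lt_of_eq_of_lt ?_ this
    rw [mul_sum]
    refine sum_congr rfl fun j _ => ?_
    rw [hT, sum_eq_single l]
    · simp; ring
    · intro b _ hb; simp [hb]
    · simp
  have hu : 0 < u := by
    obtain ⟨l⟩ := ‹Nonempty L›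
    exact lt_of_le_of_lt (mul_nonneg hN.le
      (sum_nonneg fun j _ => mul_nonneg (hA l j) (hg0 j))) (hl l)
  have hfin := h (fun j => N / u * g j) (fun j => mul_nonneg (by positivity) (hg0 j)) (by
    intro l
    have e : ∑ j, A l j * (N / u * g j) = (N * ∑ j, A l j * g j) / u := by
      rw [mul_sum, sum_div]
      exact sum_congr rfl fun j _ => by ring
    rw [e, div_le_one hu]
    exact (hl l).le)
  have e : ∑ j, w j * (N / u * g j) = N * ((∑ j, w j * g j) / u) := by
    rw [sum_div, mul_sum]
    exact sum_congr rfl fun j _ => by ring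
  rw [e] at hfin
  have : 1 < (∑ j, w j * g j) / u := by
    rw [one_lt_div hu]; linarith
  nlinarith

open Finset in
theorem sf_kkt {J L : Type*} [Fintype J] [Nonempty J] [Fintype L] [Nonempty L]
    (A : L → J → ℝ) (hA : ∀ l j, 0 ≤ A l j) (Q : J → ℕ) (hQ : ∀ j, 1 ≤ Q j)
    (s : J → ℝ) (hs : ∀ j, 0 < s j)
    (hsP : ∀ l, ∑ j, A l j * s j ≤ 1)
    (hmax : ∀ t : J → ℝ, (∀ j, 0 < t j) → (∀ l, ∑ j, A l j * t j ≤ 1) →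
        ∑ j, (Q j : ℝ) * Real.log (t j) ≤ ∑ j, (Q j : ℝ) * Real.log (s j)) :
    ∃ lam : L → ℝ, (∀ l, 0 ≤ lam l) ∧ (∀ j, ∑ l, lam l * A l j * s j = Q j) ∧
      ∀ l, ∑ j, lam l * A l j * s j = lam l := by
  have hN : (0 : ℝ) < ∑ j, (Q j : ℝ) :=
    sum_pos (fun j _ => by exact_mod_cast hQ j) univ_nonempty
  obtain ⟨lam, h0, hsum, hw⟩ := sf_duality A hA (fun j => (Q j : ℝ) / s j) _ hN
    (fun r hr hrP => sf_first_order A Q s hs hsP hmax r hr hrP)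
  have h1 : ∀ j ∈ univ, (Q j : ℝ) ≤ ∑ l, lam l * A l j * s j := by
    intro j _
    rw [← sum_mul, ← div_le_iff₀ (hs j)]
    exact hw j
  have h2 : ∀ l ∈ univ, ∑ j, lam l * A l j * s j ≤ lam l := by
    intro l _
    simp_rw [mul_assoc]
    rw [← mul_sum]
    exact mul_le_of_le_one_right (h0 l) (hsP l)
  have h3 : ∑ j, ∑ l, lam l * A l j * s j = ∑ l, ∑ j, lam l * A l j * s j := sum_comm
  have h4 := sum_le_sum h1
  have h5 := sum_le_sum h2
  refine ⟨lam, h0, fun j => ?_, fun l => ?_⟩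
  · exact ((sum_eq_sum_iff_of_le h1).1 (by linarith) j (mem_univ j)).symm
  · exact (sum_eq_sum_iff_of_le h2).1 (by linarith) l (mem_univ l)

open Finset Filter Topology in
theorem sf_upper {J L : Type*} [Fintype J] [Fintype L]
    (Q : J → ℕ) (v : ℝ) :
    Tendsto (fun c : ℕ => v + (∑ _l : L, ∑ j, Real.log (((c * Q j : ℕ) : ℝ) + 1)) / (c : ℝ))
      atTop (𝓝 v) := by
  have h : ∀ j, Tendsto (fun c : ℕ => Real.log (((c * Q j : ℕ) : ℝ) + 1) / (c : ℝ)) atTop (𝓝 0) := by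
    intro j
    have hup : Tendsto (fun c : ℕ => Real.log ((Q j : ℝ) + 1) / (c : ℝ) + Real.log c / c)
        atTop (𝓝 0) := by
      have h1 : Tendsto (fun c : ℕ => Real.log ((Q j : ℝ) + 1) / (c : ℝ)) atTop (𝓝 0) :=
        tendsto_const_div_atTop_nhds_zero_nat _
      have h2 : Tendsto (fun c : ℕ => Real.log c / (c : ℝ)) atTop (𝓝 0) :=
        Real.isLittleO_log_id_atTop.tendsto_div_nhds_zero.comp
          (tendsto_natCast_atTop_atTop (R := ℝ))
      simpa using h1.add h2
    refine tendsto_of_tendsto_of_tendsto_of_le_of_le' tendsto_const_nhds hup ?_ ?_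
    · exact Eventually.of_forall fun c => div_nonneg (Real.log_nonneg (by
        have : (0 : ℝ) ≤ ((c * Q j : ℕ) : ℝ) := Nat.cast_nonneg _
        linarith)) (Nat.cast_nonneg _)
    · filter_upwards [eventually_ge_atTop 1] with c hc
      have hc' : (1 : ℝ) ≤ c := by exact_mod_cast hc
      rw [← add_div]
      refine div_le_div_of_nonneg_right ?_ (by linarith)
      rw [← Real.log_mul (by positivity) (by positivity)]
      refine Real.log_le_log (by positivity) ?_
      push_cast
      nlinarith
  have h2 : Tendsto (fun c : ℕ => v + ∑ _l : L, ∑ j, Real.log (((c * Q j : ℕ) : ℝ) + 1) / (c : ℝ))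
      atTop (𝓝 (v + ∑ _l : L, ∑ _j : J, 0)) :=
    tendsto_const_nhds.add (tendsto_finsetSum _ fun l _ => tendsto_finsetSum _ fun j _ => h j)
  simp only [sum_const_zero, add_zero] at h2
  simpa only [sum_div] using h2

open Finset Filter Topology in
theorem log_asymptotics_storeForward_constant
    {J L : Type*} [Fintype J] [Nonempty J] [Fintype L] [Nonempty L]
    (A : L → J → ℝ) (hA : ∀ l j, 0 ≤ A l j)
    (hcol : ∀ j, ∃ l, 0 < A l j)
    (Q : J → ℕ) (hQ : ∀ j, 1 ≤ Q j) :
    Filter.Tendsto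
      (fun c : ℕ => (1 / (c : ℝ)) * Real.log (Phi A (fun j => c * Q j)))
      Filter.atTop
      (nhds (- sSup ((fun s : J → ℝ => ∑ j, (Q j : ℝ) * Real.log (s j)) ''
        {s : J → ℝ | (∀ j, 0 < s j) ∧ ∀ l, ∑ j, A l j * s j ≤ 1}))) := by
  obtain ⟨s, hs, hsP, hmax⟩ := sf_exists_max A hA hcol Q hQ
  have hsup : sSup ((fun s : J → ℝ => ∑ j, (Q j : ℝ) * Real.log (s j)) ''
        {s : J → ℝ | (∀ j, 0 < s j) ∧ ∀ l, ∑ j, A l j * s j ≤ 1}) =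
      ∑ j, (Q j : ℝ) * Real.log (s j) := by
    refine IsGreatest.csSup_eq ⟨⟨s, ⟨hs, hsP⟩, rfl⟩, ?_⟩
    rintro _ ⟨t, ⟨ht, htP⟩, rfl⟩
    exact hmax t ht htP
  rw [hsup]
  obtain ⟨lam, hlam, hQs, hls⟩ := sf_kkt A hA Q hQ s hs hsP hmax
  have hx0 : ∀ l j, 0 ≤ lam l * A l j * s j := fun l j =>
    mul_nonneg (mul_nonneg (hlam l) (hA l j)) (hs j).le
  have hround := fun j => sf_rounding (fun l => lam l * A l j * s j) (Q j) (hQ j)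
    (fun l => hx0 l j) (hQs j)
  choose m hm1 hm2 hm3 using hround
  have hz : ∀ c l j, A l j = 0 → m j c l = 0 := fun c l j h => hm2 j c l (by simp [h])
  have hrow : ∀ l, Tendsto (fun c : ℕ => ((∑ j, m j c l : ℕ) : ℝ) / (c : ℝ)) atTop (𝓝 (lam l)) := by
    intro l
    have := tendsto_finsetSum univ fun j _ => hm3 j l
    rw [hls l] at this
    refine this.congr fun c => ?_
    push_cast
    rw [sum_div]
  have hlow : Tendsto (fun c : ℕ => 1 / (c : ℝ) * Real.log (sfTerm A (fun l j => m j c l))) atTop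
      (𝓝 (∑ l, ((lam l * Real.log (lam l) - lam l)
        - ∑ j, ((lam l * A l j * s j) * Real.log (lam l * A l j * s j) - lam l * A l j * s j)
        + ∑ j, (lam l * A l j * s j) * Real.log (A l j)))) := by
    have : Tendsto (fun c : ℕ => ∑ l,
        ((Real.log ((∑ j, m j c l).factorial : ℝ) - ((∑ j, m j c l : ℕ) : ℝ) * Real.log c) / (c : ℝ)
        - ∑ j, (Real.log ((m j c l).factorial : ℝ) - (m j c l : ℝ) * Real.log c) / (c : ℝ)
        + ∑ j, (m j c l : ℝ) / (c : ℝ) * Real.log (A l j))) atTop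
      (𝓝 (∑ l, ((lam l * Real.log (lam l) - lam l)
        - ∑ j, ((lam l * A l j * s j) * Real.log (lam l * A l j * s j) - lam l * A l j * s j)
        + ∑ j, (lam l * A l j * s j) * Real.log (A l j)))) := by
      refine tendsto_finsetSum _ fun l _ => Tendsto.add (Tendsto.sub ?_ ?_) ?_
      · exact sf_factorial_limit _ _ (hrow l)
      · exact tendsto_finsetSum _ fun j _ => sf_factorial_limit _ _ (hm3 j l)
      · exact tendsto_finsetSum _ fun j _ => (hm3 j l).mul_const _
    refine this.congr fun c => ?_
    rw [sf_log_term A hA _ (fun l j h => hz c l j h) (Real.log c), mul_sum]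
    refine sum_congr rfl fun l _ => ?_
    rw [mul_add, mul_sub, mul_sum, mul_sum]
    congr 1
    · congr 1
      · ring
      · exact sum_congr rfl fun j _ => by ring
    · exact sum_congr rfl fun j _ => by ring
  have hval : ∑ l, ((lam l * Real.log (lam l) - lam l)
        - ∑ j, ((lam l * A l j * s j) * Real.log (lam l * A l j * s j) - lam l * A l j * s j)
        + ∑ j, (lam l * A l j * s j) * Real.log (A l j)) =
      - ∑ j, (Q j : ℝ) * Real.log (s j) := by
    have h1 : ∀ l, ((lam l * Real.log (lam l) - lam l)
        - ∑ j, ((lam l * A l j * s j) * Real.log (lam l * A l j * s j) - lam l * A l j * s j)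
        + ∑ j, (lam l * A l j * s j) * Real.log (A l j)) =
        - ∑ j, lam l * A l j * s j * Real.log (s j) := by
      intro l
      have h2 : ∀ j, (lam l * A l j * s j) * Real.log (lam l * A l j * s j) =
          (lam l * A l j * s j) * Real.log (lam l) + (lam l * A l j * s j) * Real.log (A l j)
          + (lam l * A l j * s j) * Real.log (s j) := by
        intro j
        by_cases ha : lam l = 0
        · simp [ha]
        by_cases hb : A l j = 0
        · simp [hb]
        rw [Real.log_mul (mul_ne_zero ha hb) (hs j).ne', Real.log_mul ha hb]
        ring
      simp_rw [h2]
      rw [sum_sub_distrib, sum_add_distrib, sum_add_distrib, ← sum_mul, hls l]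
      ring
    simp_rw [h1]
    rw [sum_neg_distrib, sum_comm]
    congr 1
    refine sum_congr rfl fun j _ => ?_
    rw [← sum_mul, hQs j]
  rw [hval] at hlow
  refine tendsto_of_tendsto_of_tendsto_of_le_of_le' hlow
    (sf_upper (L := L) Q (- ∑ j, (Q j : ℝ) * Real.log (s j))) ?_ ?_
  · refine Eventually.of_forall fun c => ?_
    refine mul_le_mul_of_nonneg_left ?_ (by positivity)
    exact Real.log_le_log (sf_term_pos A hA _ fun l j h => hz c l j h)
      (sf_term_le_Phi A hA _ _ (fun l j h => hz c l j h) (fun j => hm1 j c))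
  · filter_upwards [eventually_ge_atTop 1] with c hc
    have hc0 : (0 : ℝ) < c := by exact_mod_cast hc
    have hPhi : 0 < Phi A (fun j => c * Q j) :=
      lt_of_lt_of_le (sf_term_pos A hA _ fun l j h => hz c l j h)
        (sf_term_le_Phi A hA _ _ (fun l j h => hz c l j h) (fun j => hm1 j c))
    have h := sf_Phi_le A hA s hs hsP (fun j => c * Q j)
    have hsp : 0 < ∏ j, s j ^ (c * Q j) := prod_pos fun j _ => pow_pos (hs j) _
    have h' := Real.log_le_log (mul_pos hPhi hsp) h
    rw [Real.log_mul hPhi.ne' hsp.ne', Real.log_prod (fun j _ => (pow_pos (hs j) _).ne'),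
      Real.log_prod (fun l _ => (by positivity))] at h'
    simp_rw [Real.log_pow] at h'
    have e1 : ∀ _l : L, Real.log (∏ j, (((c * Q j : ℕ) : ℝ) + 1)) =
        ∑ j, Real.log (((c * Q j : ℕ) : ℝ) + 1) := fun _ =>
      Real.log_prod (fun j _ => by positivity)
    have e2 : ∑ j, ((c * Q j : ℕ) : ℝ) * Real.log (s j) = c * ∑ j, (Q j : ℝ) * Real.log (s j) := by
      rw [mul_sum]
      refine sum_congr rfl fun j _ => ?_
      push_cast
      ring
    rw [e2] at h'
    rw [sum_congr rfl (fun l (_ : l ∈ univ) => e1 l)] at h'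
    rw [one_div, inv_mul_le_iff₀ hc0, mul_add, mul_div_cancel₀ _ hc0.ne']
    linarith
end
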